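/- If ν_1, …, ν_n ∈ ℂ are the eigenvalues of τ·L·R listed with algebraic multiplicity (i.e. the characteristic polynomial of τLR over ℂ equals ∏_{l=1}^n (X − ν_l)), then the characteristic polynomial of A over ℂ equals ∏_{l=1}^n g_{ν_l}(X), where g_ν(λ) = (λ−1)²(λ−1+p) + ((λ−1)κ₁ + p(κ₁−κ₂))ν. -/

import Mathlib

open Matrix Polynomial

/-- The 3n×3n block matrix A = [[I, τR, 0], [−κ₁L, I, −κ₂I], [−pL, 0, (1−p)I]]. -/
def Amat (n : ℕ) (L R : Matrix (Fin n) (Fin n) ℝ) (τ κ₁ κ₂ p : ℝ) :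
    Matrix (Fin 3 × Fin n) (Fin 3 × Fin n) ℝ :=
  Matrix.of fun a b =>
    ![![(1 : Matrix (Fin n) (Fin n) ℝ), τ • R, 0],
      ![(-κ₁) • L, 1, (-κ₂) • (1 : Matrix (Fin n) (Fin n) ℝ)],
      ![(-p) • L, 0, (1 - p) • (1 : Matrix (Fin n) (Fin n) ℝ)]] a.1 b.1 a.2 b.2

/-- The cubic polynomial g_ν(λ) = (λ−1)²(λ−1+p) + ((λ−1)κ₁ + p(κ₁−κ₂))ν over ℂ. -/
noncomputable def gPoly (κ₁ κ₂ p : ℝ) (ν : ℂ) : Polynomial ℂ :=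
  (X - 1) ^ 2 * (X - 1 + C (p : ℂ))
    + ((X - 1) * C (κ₁ : ℂ) + C ((p : ℂ) * ((κ₁ : ℂ) - (κ₂ : ℂ)))) * C ν

lemma det_aux {n : ℕ} (N : Matrix (Fin n) (Fin n) ℂ) (ν : Fin n → ℂ)
    (hν : N.charpoly = ∏ l, (X - C (ν l))) (a b : ℂ) :
    (a • (1 : Matrix (Fin n) (Fin n) ℂ) + b • N).det = ∏ l, (a + b * ν l) := by
  by_cases hb : b = 0
  · subst hb
    simp
  · have h1 : a • (1 : Matrix (Fin n) (Fin n) ℂ) + b • N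
        = (-b) • (Matrix.scalar (Fin n) (-a / b) - N) := by
      ext i j
      by_cases hij : i = j
      · subst hij
        simp
        field_simp
        ring
      · simp [hij]
    rw [h1, det_smul, ← Matrix.eval_charpoly, hν, eval_prod, Fintype.card_fin]
    have h2 : (-b) ^ n = ∏ _l : Fin n, (-b) := by simp
    rw [h2, ← Finset.prod_mul_distrib]
    refine Finset.prod_congr rfl fun l _ => ?_
    simp
    field_simp
    ring

/-- Reindexing of three blocks. -/
def e3 (n : ℕ) : (Fin n ⊕ Fin n) ⊕ Fin n ≃ Fin 3 × Fin n where
  toFun := Sum.elim (Sum.elim (fun i => (0, i)) (fun i => (1, i))) (fun i => (2, i))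
  invFun a := ![Sum.inl (Sum.inl a.2), Sum.inl (Sum.inr a.2), Sum.inr a.2] a.1
  left_inv := by rintro ((i | i) | i) <;> rfl
  right_inv := by rintro ⟨k, i⟩; fin_cases k <;> rfl

lemma block_det {n : ℕ} (L S : Matrix (Fin n) (Fin n) ℂ) (x y k₁ k₂ p : ℂ)
    (hx : x ≠ 0) (hy : y ≠ 0) :
    (fromBlocks (fromBlocks (x • (1 : Matrix (Fin n) (Fin n) ℂ)) (-S) (k₁ • L) (x • 1))
      (fromRows 0 (k₂ • (1 : Matrix (Fin n) (Fin n) ℂ)))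
      (fromCols (p • L) 0) (y • (1 : Matrix (Fin n) (Fin n) ℂ))).det
      = y ^ n * (x ^ n * (x • (1 : Matrix (Fin n) (Fin n) ℂ)
          + ((k₁ - k₂ * p / y) / x) • (L * S)).det) := by
  let iy : Invertible (y • (1 : Matrix (Fin n) (Fin n) ℂ)) :=
    ⟨y⁻¹ • 1, by simp [smul_smul, hy], by simp [smul_smul, hy]⟩
  let ix : Invertible (x • (1 : Matrix (Fin n) (Fin n) ℂ)) :=
    ⟨x⁻¹ • 1, by simp [smul_smul, hx], by simp [smul_smul, hx]⟩
  have hiy : ⅟(y • (1 : Matrix (Fin n) (Fin n) ℂ)) = y⁻¹ • 1 := rfl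
  have hix : ⅟(x • (1 : Matrix (Fin n) (Fin n) ℂ)) = x⁻¹ • 1 := rfl
  rw [det_fromBlocks₂₂, hiy]
  have h : fromBlocks (x • (1 : Matrix (Fin n) (Fin n) ℂ)) (-S) (k₁ • L) (x • 1)
      - fromRows (0 : Matrix (Fin n) (Fin n) ℂ) (k₂ • (1 : Matrix (Fin n) (Fin n) ℂ)) * (y⁻¹ • (1 : Matrix (Fin n) (Fin n) ℂ))
        * fromCols (p • L) (0 : Matrix (Fin n) (Fin n) ℂ)
      = fromBlocks (x • (1 : Matrix (Fin n) (Fin n) ℂ)) (-S) ((k₁ - k₂ * p / y) • L) (x • 1) := by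
    rw [fromRows_mul, fromRows_mul_fromCols]
    ext (i | i) (j | j) <;> simp
    field_simp
  rw [h, det_fromBlocks₁₁, hix, det_smul, det_smul]
  simp only [det_one, Fintype.card_fin, mul_one]
  congr 3
  simp [smul_smul, div_eq_mul_inv, mul_comm]

/-- The block matrix, reindexed, written with `fromBlocks`. -/
lemma Amat_blocks (n : ℕ) (L R : Matrix (Fin n) (Fin n) ℝ) (τ κ₁ κ₂ p : ℝ) :
    (Amat n L R τ κ₁ κ₂ p).submatrix (e3 n) (e3 n)
      = fromBlocks (fromBlocks (1 : Matrix (Fin n) (Fin n) ℝ) (τ • R) ((-κ₁) • L) 1)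
        (fromRows 0 ((-κ₂) • (1 : Matrix (Fin n) (Fin n) ℝ)))
        (fromCols ((-p) • L) 0)
        ((1 - p) • (1 : Matrix (Fin n) (Fin n) ℝ)) := by
  ext ((i | i) | i) ((j | j) | j) <;> rfl

theorem stmt1 (n : ℕ) (hn : 1 ≤ n) (L R : Matrix (Fin n) (Fin n) ℝ)
    (hRdiag : ∀ i j, i ≠ j → R i j = 0) (hRpos : ∀ i, 0 < R i i)
    (τ κ₁ κ₂ p : ℝ) (ν : Fin n → ℂ)
    (hν : ((τ • (L * R)).map ((↑) : ℝ → ℂ)).charpoly = ∏ l, (X - C (ν l))) :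
    ((Amat n L R τ κ₁ κ₂ p).map ((↑) : ℝ → ℂ)).charpoly
      = ∏ l, gPoly κ₁ κ₂ p (ν l) := by
  apply Polynomial.eq_of_infinite_eval_eq
  have hinf : ({1, 1 - (p : ℂ)} : Set ℂ)ᶜ.Infinite :=
    Set.Finite.infinite_compl (Set.toFinite _)
  refine hinf.mono ?_
  intro z hz
  simp only [Set.mem_compl_iff, Set.mem_insert_iff, Set.mem_singleton_iff, not_or] at hz
  have hx : z - 1 ≠ 0 := sub_ne_zero.2 hz.1
  have hy : z - 1 + p ≠ 0 := fun h => hz.2 (by linear_combination h)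
  show eval z _ = eval z _
  rw [Matrix.eval_charpoly, eval_prod, ← Matrix.det_submatrix_equiv_self (e3 n)]
  have hM : (Matrix.scalar (Fin 3 × Fin n) z
        - (Amat n L R τ κ₁ κ₂ p).map ((↑) : ℝ → ℂ)).submatrix (e3 n) (e3 n)
      = fromBlocks (fromBlocks ((z - 1) • (1 : Matrix (Fin n) (Fin n) ℂ))
          (-((τ • R).map ((↑) : ℝ → ℂ))) ((κ₁ : ℂ) • L.map ((↑) : ℝ → ℂ)) ((z - 1) • 1))
        (fromRows 0 ((κ₂ : ℂ) • (1 : Matrix (Fin n) (Fin n) ℂ)))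
        (fromCols ((p : ℂ) • L.map ((↑) : ℝ → ℂ)) 0)
        ((z - 1 + p) • (1 : Matrix (Fin n) (Fin n) ℂ)) := by
    have h0 : (Matrix.scalar (Fin 3 × Fin n) z
          - (Amat n L R τ κ₁ κ₂ p).map ((↑) : ℝ → ℂ)).submatrix (e3 n) (e3 n)
        = Matrix.scalar ((Fin n ⊕ Fin n) ⊕ Fin n) z
          - ((Amat n L R τ κ₁ κ₂ p).submatrix (e3 n) (e3 n)).map ((↑) : ℝ → ℂ) := by
      ext i j
      simp [Matrix.diagonal_apply]
    rw [h0, Amat_blocks]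
    ext ((i | i) | i) ((j | j) | j) <;> by_cases hij : i = j <;>
      simp [hij, Matrix.one_apply, Matrix.diagonal_apply]
    ring
  rw [hM, block_det _ _ _ _ _ _ _ hx hy]
  have hN : L.map ((↑) : ℝ → ℂ) * (τ • R).map ((↑) : ℝ → ℂ)
      = (τ • (L * R)).map ((↑) : ℝ → ℂ) := by
    rw [← Matrix.mul_smul]
    exact (Matrix.map_mul (f := Complex.ofRealHom)).symm
  rw [hN, det_aux _ ν hν]
  have h2 : ∀ c : ℂ, c ^ n = ∏ _l : Fin n, c := by simp
  rw [h2, h2, ← Finset.prod_mul_distrib, ← Finset.prod_mul_distrib]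
  refine Finset.prod_congr rfl fun l _ => ?_
  simp [gPoly]
  field_simp
  ring
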